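/- Let k ≥ 2, let X = (X_1,…,X_k) follow the multinomial distribution M_k(n,π), and let g : ℕ^k → ℝ. Then for every integer x_k with 0 ≤ x_k < n, E[g(X) | X_k = x_k + 1] − E[g(X) | X_k = x_k] = E[ w_{-k|k}(X) Δ_k g(X) | X_k = x_k ] + Cov( w_{-k|k}(X), g(X) | X_k = x_k ), where w_{-k|k} is the conditional multinomial w-function and Δ_k g(x) := g(x+e_k) − g(x). -/

import Mathlib

/-!
The multinomial p.m.f. `p` satisfies one pointwise recursion: for every coordinate `i`,
`(x_i + 1) π₀ p(x + e_i) = π_i (n - ∑ x) p(x)` (`multPMF_update`). Everything follows by summing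
it over a slice `{x_L = j}`. Write `S j f` for the sum of `p f` over this slice, `r(x)` for
`n - ∑ x`.

* For `i = L`, the shift `x ↦ x + e_L` maps the slice `j` onto the slice `j + 1`, whence
  `(j + 1) π₀ S (j + 1) f = π_L S j (r · f(· + e_L))` (`sliceSum_succ`).
* For `i ≠ L`, the shift preserves the slice, whence `π₀ S j x_i = π_i S j r`. Adding these to the
  trivial identity `π₀ S j r = π₀ S j r` gives `π₀ (n - j) S j 1 = (1 - π_L) S j r`
  (`sliceSum_one`), which says that `w` has conditional mean one.

On the slice `j`, `w` is a multiple of `r`, so both facts together show that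
`E[g(X) | X_L = j + 1] = E[w(X) g(X + e_L) | X_L = j]`. As `w` has conditional mean one, the right
side of the theorem is `E[w(X) g(X + e_L) | X_L = j] - E[g(X) | X_L = j]`.
-/

open scoped BigOperators

/-- The p.m.f. of the multinomial distribution `M_k(n, π)` on `ℕ^k`. -/
noncomputable def multPMF (k n : ℕ) (π : Fin k → ℝ) (x : Fin k → ℕ) : ℝ :=
  if ∑ i, x i ≤ n then
    (Nat.factorial n : ℝ) /
        ((∏ i, (Nat.factorial (x i) : ℝ)) * (Nat.factorial (n - ∑ i, x i) : ℝ)) *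
      (∏ i, π i ^ x i) * (1 - ∑ i, π i) ^ (n - ∑ i, x i)
  else 0

/-- Forward difference `Δ_i g (x) = g (x + e_i) - g x`. -/
def fd {k : ℕ} (g : (Fin k → ℕ) → ℝ) (i : Fin k) (x : Fin k → ℕ) : ℝ :=
  g (Function.update x i (x i + 1)) - g x

/-- Conditional expectation `E[f(X) | X_L = xk]` for a discrete random vector `X` on `ℕ^k`
with p.m.f. `p`. -/
noncomputable def condE (k : ℕ) (p : (Fin k → ℕ) → ℝ) (L : Fin k) (xk : ℕ)
    (f : (Fin k → ℕ) → ℝ) : ℝ :=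
  (∑' x : Fin k → ℕ, if x L = xk then p x * f x else 0) /
    (∑' x : Fin k → ℕ, if x L = xk then p x else 0)

/-- Conditional covariance `Cov(f(X), h(X) | X_L = xk)`. -/
noncomputable def condCov (k : ℕ) (p : (Fin k → ℕ) → ℝ) (L : Fin k) (xk : ℕ)
    (f h : (Fin k → ℕ) → ℝ) : ℝ :=
  condE k p L xk (fun x => f x * h x) - condE k p L xk f * condE k p L xk h

/-- The conditional multinomial `w`-function `w_{-k|k}`. -/
noncomputable def multCondW (k n : ℕ) (π : Fin k → ℝ) (L : Fin k) (x : Fin k → ℕ) : ℝ :=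
  if x L = n then 0
  else (1 - π L) * ((n : ℝ) - ∑ i, (x i : ℝ)) / (((n : ℝ) - (x L : ℝ)) * (1 - ∑ i, π i))

/-- The ratio of the multinomial p.m.f. at neighbouring points, with denominators cleared so that
it also holds at and beyond the boundary `∑ x = n`. -/
lemma multPMF_update (k n : ℕ) (π : Fin k → ℝ) (i : Fin k) (x : Fin k → ℕ) :
    ((x i : ℝ) + 1) * (1 - ∑ i, π i) * multPMF k n π (Function.update x i (x i + 1))
      = π i * ((n : ℝ) - ∑ i, (x i : ℝ)) * multPMF k n π x := by
  classical
  have hs : ∑ j, Function.update x i (x i + 1) j = ∑ j, x j + 1 := by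
    rw [Finset.sum_update_of_mem (Finset.mem_univ i),
      ← Finset.add_sum_erase Finset.univ x (Finset.mem_univ i), Finset.sdiff_singleton_eq_erase]
    ring
  have hf : ∏ j, (Nat.factorial (Function.update x i (x i + 1) j) : ℝ)
      = ((x i : ℝ) + 1) * ∏ j, (Nat.factorial (x j) : ℝ) := by
    rw [← Finset.mul_prod_erase Finset.univ _ (Finset.mem_univ i),
      ← Finset.mul_prod_erase Finset.univ (fun j => (Nat.factorial (x j) : ℝ)) (Finset.mem_univ i),
      Finset.prod_congr rfl (g := fun j => (Nat.factorial (x j) : ℝ))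
        (fun j hj => by rw [Function.update_of_ne (Finset.ne_of_mem_erase hj)])]
    simp only [Function.update_self, Nat.factorial_succ]
    push_cast
    ring
  have hp : ∏ j, π j ^ (Function.update x i (x i + 1) j) = π i * ∏ j, π j ^ x j := by
    rw [← Finset.mul_prod_erase Finset.univ _ (Finset.mem_univ i),
      ← Finset.mul_prod_erase Finset.univ (fun j => π j ^ x j) (Finset.mem_univ i),
      Finset.prod_congr rfl (g := fun j => π j ^ x j)
        (fun j hj => by rw [Function.update_of_ne (Finset.ne_of_mem_erase hj)])]
    simp only [Function.update_self, pow_succ]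
    ring
  unfold multPMF
  rw [hs, hf, hp]
  rcases lt_trichotomy (∑ j, x j) n with h | h | h
  · obtain ⟨d, rfl⟩ := Nat.exists_eq_add_of_lt h
    rw [if_pos (by omega), if_pos (by omega),
      show ∑ j, x j + d + 1 - (∑ j, x j + 1) = d by omega,
      show ∑ j, x j + d + 1 - ∑ j, x j = d + 1 by omega, Nat.factorial_succ d]
    have h1 : ∏ j, (Nat.factorial (x j) : ℝ) ≠ 0 := by positivity
    have h2 : (Nat.factorial d : ℝ) ≠ 0 := by positivity
    have h3 : (d : ℝ) + 1 ≠ 0 := by positivity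
    have h4 : (x i : ℝ) + 1 ≠ 0 := by positivity
    push_cast
    field_simp
    ring
  · have : (n : ℝ) = ∑ j, (x j : ℝ) := by rw [← h]; push_cast; rfl
    rw [if_neg (by omega), this]
    ring
  · rw [if_neg (by omega), if_neg (by omega)]
    ring

/-- The sum of `p f` over the slice `{x | x_L = j}`, for `p` the multinomial p.m.f.; both the
numerator and the denominator of a conditional expectation are of this form. -/
noncomputable def sliceSum (k n : ℕ) (π : Fin k → ℝ) (L : Fin k) (j : ℕ)
    (f : (Fin k → ℕ) → ℝ) : ℝ :=
  ∑' x : Fin k → ℕ, if x L = j then multPMF k n π x * f x else 0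

lemma condE_eq (k n : ℕ) (π : Fin k → ℝ) (L : Fin k) (j : ℕ) (f : (Fin k → ℕ) → ℝ) :
    condE k (multPMF k n π) L j f = sliceSum k n π L j f / sliceSum k n π L j (fun _ => 1) := by
  simp [condE, sliceSum]

lemma summable_slice (k n : ℕ) (π : Fin k → ℝ) (L : Fin k) (j : ℕ) (f : (Fin k → ℕ) → ℝ) :
    Summable fun x : Fin k → ℕ => if x L = j then multPMF k n π x * f x else 0 := by
  -- The p.m.f. vanishes outside the finite box `[0, n]^k`.
  apply summable_of_ne_finset_zero (s := Finset.Iic fun _ => n)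
  intro x hx
  have : ¬ ∑ i, x i ≤ n := fun h => hx (Finset.mem_Iic.2 fun i =>
    (Finset.single_le_sum (fun _ _ => Nat.zero_le _) (Finset.mem_univ i)).trans h)
  simp [multPMF, this]

lemma sliceSum_add (k n : ℕ) (π : Fin k → ℝ) (L : Fin k) (j : ℕ) (f h : (Fin k → ℕ) → ℝ) :
    sliceSum k n π L j (fun x => f x + h x)
      = sliceSum k n π L j f + sliceSum k n π L j h := by
  unfold sliceSum
  rw [← (summable_slice k n π L j f).tsum_add (summable_slice k n π L j h)]
  refine tsum_congr fun x => ?_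
  split_ifs <;> ring

lemma sliceSum_mul (k n : ℕ) (π : Fin k → ℝ) (L : Fin k) (j : ℕ) (c : ℝ)
    (f : (Fin k → ℕ) → ℝ) :
    sliceSum k n π L j (fun x => c * f x) = c * sliceSum k n π L j f := by
  unfold sliceSum
  rw [← tsum_mul_left]
  refine tsum_congr fun x => ?_
  split_ifs <;> ring

lemma sliceSum_sum {ι : Type*} (k n : ℕ) (π : Fin k → ℝ) (L : Fin k) (j : ℕ) (s : Finset ι)
    (f : ι → (Fin k → ℕ) → ℝ) :
    sliceSum k n π L j (fun x => ∑ i ∈ s, f i x) = ∑ i ∈ s, sliceSum k n π L j (f i) := by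
  classical
  induction s using Finset.induction_on with
  | empty => simp [sliceSum]
  | insert a s ha ih =>
    simp only [Finset.sum_insert ha]
    rw [sliceSum_add, ih]

lemma sliceSum_congr (k n : ℕ) (π : Fin k → ℝ) (L : Fin k) (j : ℕ) {f h : (Fin k → ℕ) → ℝ}
    (hfh : ∀ x, x L = j → f x = h x) :
    sliceSum k n π L j f = sliceSum k n π L j h := by
  refine tsum_congr fun x => ?_
  split_ifs with hx
  · rw [hfh x hx]
  · rfl

/-- Reindexing a sum along `x ↦ x + e_i`, which is injective with range `{x_i ≠ 0}`. -/
lemma tsum_update_succ {k : ℕ} (i : Fin k) (F : (Fin k → ℕ) → ℝ) (hF : ∀ x, x i = 0 → F x = 0) :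
    ∑' x : Fin k → ℕ, F (Function.update x i (x i + 1)) = ∑' x, F x := by
  refine Function.Injective.tsum_eq (g := fun x : Fin k → ℕ => Function.update x i (x i + 1))
    ?_ ?_
  · intro x y hxy
    funext j
    have := congrFun hxy j
    by_cases hj : j = i
    · subst hj
      simpa using this
    · simpa [Function.update_of_ne hj] using this
  · intro x hx
    have hx0 : x i ≠ 0 := fun h => hx (hF x h)
    exact ⟨Function.update x i (x i - 1), by simp [Nat.sub_add_cancel (Nat.pos_of_ne_zero hx0)]⟩

/-- Sums over adjacent slices are related by the shift `x ↦ x + e_L`. -/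
lemma sliceSum_succ (k n : ℕ) (π : Fin k → ℝ) (L : Fin k) (j : ℕ) (f : (Fin k → ℕ) → ℝ) :
    ((j : ℝ) + 1) * (1 - ∑ i, π i) * sliceSum k n π L (j + 1) f
      = π L * sliceSum k n π L j
          (fun x => ((n : ℝ) - ∑ i, (x i : ℝ)) * f (Function.update x L (x L + 1))) := by
  unfold sliceSum
  rw [← tsum_update_succ L _ (by intro x hx; rw [if_neg (by omega)]), ← tsum_mul_left,
    ← tsum_mul_left]
  refine tsum_congr fun x => ?_
  simp only [Function.update_self, add_left_inj]
  split_ifs with hx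
  · have := multPMF_update k n π L x
    subst hx
    linear_combination f (Function.update x L (x L + 1)) * this
  · ring

/-- The first moment of another coordinate over a slice, through the slice-preserving shift
`x ↦ x + e_i`. -/
lemma sliceSum_coord (k n : ℕ) (π : Fin k → ℝ) (L i : Fin k) (hi : i ≠ L) (j : ℕ) :
    (1 - ∑ i, π i) * sliceSum k n π L j (fun x => (x i : ℝ))
      = π i * sliceSum k n π L j (fun x => (n : ℝ) - ∑ i, (x i : ℝ)) := by
  unfold sliceSum
  rw [← tsum_update_succ i _ (by intro x hx; simp [hx]), ← tsum_mul_left, ← tsum_mul_left]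
  refine tsum_congr fun x => ?_
  simp only [Function.update_self, Function.update_of_ne hi.symm]
  split_ifs with hx
  · have := multPMF_update k n π i x
    push_cast
    linear_combination this
  · ring

/-- The conditional mean of `n - ∑ X` given `X_L = j`, with denominators cleared. -/
lemma sliceSum_one (k n : ℕ) (π : Fin k → ℝ) (L : Fin k) (j : ℕ) :
    (1 - ∑ i, π i) * (((n : ℝ) - j) * sliceSum k n π L j (fun _ => 1))
      = (1 - π L) * sliceSum k n π L j (fun x => (n : ℝ) - ∑ i, (x i : ℝ)) := by
  classical
  -- On the slice, `n - j` is `n - ∑ x` plus the coordinates other than `L`.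
  have h1 : ((n : ℝ) - j) * sliceSum k n π L j (fun _ => 1)
      = sliceSum k n π L j (fun x => (n : ℝ) - ∑ i, (x i : ℝ))
        + ∑ i ∈ Finset.univ.erase L, sliceSum k n π L j (fun x => (x i : ℝ)) := by
    rw [← sliceSum_sum, ← sliceSum_add, ← sliceSum_mul]
    refine sliceSum_congr k n π L j fun x hx => ?_
    rw [← Finset.add_sum_erase Finset.univ (fun i => (x i : ℝ)) (Finset.mem_univ L), hx]
    ring
  rw [h1, mul_add, Finset.mul_sum,
    Finset.sum_congr rfl fun i hi => sliceSum_coord k n π L i (Finset.ne_of_mem_erase hi) j,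
    ← Finset.sum_mul, ← Finset.add_sum_erase Finset.univ π (Finset.mem_univ L)]
  ring

lemma sliceSum_one_pos (k n : ℕ) (π : Fin k → ℝ) (hπ : ∀ i, 0 < π i) (hπ0 : 0 < 1 - ∑ i, π i)
    (L : Fin k) (j : ℕ) (hj : j ≤ n) : 0 < sliceSum k n π L j (fun _ => 1) := by
  have hprod : ∀ x : Fin k → ℕ, 0 < ∏ i, π i ^ x i :=
    fun x => Finset.prod_pos fun i _ => pow_pos (hπ i) _
  refine (summable_slice k n π L j (fun _ => 1)).tsum_pos (fun x => ?_) (Pi.single L j) ?_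
  · unfold multPMF
    have := hprod x
    split_ifs <;> positivity
  · have := hprod (Pi.single L j)
    have hs : ∑ i, (Pi.single L j : Fin k → ℕ) i ≤ n := by simpa using hj
    unfold multPMF
    rw [if_pos (by simp), if_pos hs]
    positivity

/-- For `X ~ M_k(n, π)` and `0 ≤ x_k < n`:
`Δ_k E[g(X)|X_k = x_k] = E[w_{-k|k}(X) Δ_k g(X) | X_k = x_k] + Cov(w_{-k|k}(X), g(X) | X_k = x_k)`. -/
theorem multinomial_conditional_difference_covariance_identity
    (k n : ℕ) (hk : 2 ≤ k) (π : Fin k → ℝ)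
    (hπ : ∀ i, 0 < π i ∧ π i < 1) (hπ0 : 0 < 1 - ∑ i, π i)
    (g : (Fin k → ℕ) → ℝ) (xk : ℕ) (hxk : xk < n) :
    let L : Fin k := ⟨k - 1, by omega⟩
    condE k (multPMF k n π) L (xk + 1) g - condE k (multPMF k n π) L xk g
      = condE k (multPMF k n π) L xk (fun x => multCondW k n π L x * fd g L x)
        + condCov k (multPMF k n π) L xk (multCondW k n π L) g := by
  intro L
  have hn : (0 : ℝ) < (n : ℝ) - xk := sub_pos.2 (by exact_mod_cast hxk)
  have hL := (hπ L).1
  have hL1 : 0 < 1 - π L := sub_pos.2 (hπ L).2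
  have hZ := sliceSum_one_pos k n π (fun i => (hπ i).1) hπ0 L xk hxk.le
  have hZ' := sliceSum_one_pos k n π (fun i => (hπ i).1) hπ0 L (xk + 1) hxk
  -- On the slice `x_L = xk`, the weight is `c (n - ∑ x)`.
  set c : ℝ := (1 - π L) / (((n : ℝ) - xk) * (1 - ∑ i, π i)) with hc
  have hw : ∀ x : Fin k → ℕ, x L = xk →
      multCondW k n π L x = c * ((n : ℝ) - ∑ i, (x i : ℝ)) := by
    intro x hx
    rw [multCondW, if_neg (by omega), hx, hc]
    ring
  set T := sliceSum k n π L xk (fun x => (n : ℝ) - ∑ i, (x i : ℝ)) with hT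
  set U := sliceSum k n π L xk
    (fun x => ((n : ℝ) - ∑ i, (x i : ℝ)) * g (Function.update x L (x L + 1))) with hU
  have hW : sliceSum k n π L xk (multCondW k n π L) = c * T := by
    rw [hT, ← sliceSum_mul]
    exact sliceSum_congr k n π L xk hw
  have hcT : c * T = sliceSum k n π L xk (fun _ => 1) := by
    have := sliceSum_one k n π L xk
    rw [hc, div_mul_eq_mul_div, div_eq_iff (by positivity)]
    linear_combination -this
  have hsum : sliceSum k n π L xk (fun x => multCondW k n π L x * fd g L x)
      + sliceSum k n π L xk (fun x => multCondW k n π L x * g x) = c * U := by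
    rw [hU, ← sliceSum_mul, ← sliceSum_add]
    refine sliceSum_congr k n π L xk fun x hx => ?_
    rw [hw x hx, fd]
    ring
  have h1 := sliceSum_succ k n π L xk g
  have h2 := sliceSum_succ k n π L xk (fun _ => 1)
  simp only [mul_one] at h2
  rw [← hU] at h1
  rw [← hT] at h2
  have hshift : sliceSum k n π L (xk + 1) g / sliceSum k n π L (xk + 1) (fun _ => 1)
      = c * U / sliceSum k n π L xk (fun _ => 1) := by
    rw [div_eq_div_iff hZ'.ne' hZ.ne', ← hcT]
    have hx : ((xk : ℝ) + 1) * (1 - ∑ i, π i) ≠ 0 := by positivity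
    apply mul_left_cancel₀ hx
    linear_combination c * T * h1 - c * U * h2
  rw [condCov]
  simp only [condE_eq]
  rw [hshift, hW, hcT, div_self hZ.ne', ← hsum]
  ring
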